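/- Let w₁, w₂ > 0 and 0 < a < (w₁+w₂)/2, define G₂(a,w,t) = e^{(w₁+w₂−a)t}/((e^{w₁t}−1)(e^{w₂t}−1)) − 1/(w₁w₂t²) for t > 0, and let t₀ > 0 be such that G₂(a,w,t₀) = 0, G₂(a,w,t) > 0 for 0 < t < t₀ and G₂(a,w,t) < 0 for t > t₀. Then the function σ ↦ ∫₀^∞ G₂(a,w,t) (t/t₀)^σ (dt/t) is strictly decreasing on the interval (1,2). -/

import Mathlib

/-!
Both `G₂ a w₁ w₂ t` and `1 - t / t₀` change sign from positive to negative at `t = t₀`. Hence, for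
each fixed `t`, the function `σ ↦ G₂ a w₁ w₂ t * (t / t₀) ^ σ` is antitone, strictly so for
`t ≠ t₀`, and integrating in `t` preserves this as long as the integrals converge. They do for
`1 < σ < 2`: `G₂ a w₁ w₂ t` is `O(t⁻¹)` at `0`, where the double poles of its two terms cancel, and
`O(t⁻²)` at infinity.
-/

open MeasureTheory Real Set

/-- The Barnes `G₂` kernel:
`G₂(a, w, t) = e^{(w₁+w₂−a)t}/((e^{w₁t}−1)(e^{w₂t}−1)) − 1/(w₁w₂t²)`. -/
noncomputable def G₂ (a w₁ w₂ t : ℝ) : ℝ :=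
  Real.exp ((w₁ + w₂ - a) * t) / ((Real.exp (w₁ * t) - 1) * (Real.exp (w₂ * t) - 1))
    - 1 / (w₁ * w₂ * t ^ 2)

open Filter Asymptotics Topology

section SignChange

lemma mul_rpow_lt_mul_rpow_of_mul_one_sub_pos {k c x y : ℝ} (hc : 0 < c)
    (hk : 0 < k * (1 - c)) (hxy : x < y) : k * c ^ y < k * c ^ x := by
  rcases pos_and_pos_or_neg_and_neg_of_mul_pos hk with ⟨hk, hc1⟩ | ⟨hk, hc1⟩
  · exact mul_lt_mul_of_pos_left (rpow_lt_rpow_of_exponent_gt hc (sub_pos.1 hc1) hxy) hk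
  · exact mul_lt_mul_of_neg_left (rpow_lt_rpow_of_exponent_lt (sub_neg.1 hc1) hxy) hk

lemma mul_rpow_le_mul_rpow_of_mul_one_sub_nonneg {k c x y : ℝ} (hc : 0 < c)
    (hk : 0 ≤ k * (1 - c)) (hxy : x ≤ y) : k * c ^ y ≤ k * c ^ x := by
  rcases hxy.eq_or_lt with rfl | hxy
  · rfl
  rcases hk.eq_or_lt with hk | hk
  · rcases mul_eq_zero.1 hk.symm with rfl | hc1
    · simp
    · simp [← sub_eq_zero.1 hc1]
  · exact (mul_rpow_lt_mul_rpow_of_mul_one_sub_pos hc hk hxy).le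

theorem strictAntiOn_integral_mul_rpow {α : Type*} [MeasurableSpace α] {μ : Measure α}
    {f g : α → ℝ} {s : Set ℝ} (hg : ∀ᵐ x ∂μ, 0 < g x) (hfg : ∀ᵐ x ∂μ, 0 ≤ f x * (1 - g x))
    (hμ : ∃ᵐ x ∂μ, 0 < f x * (1 - g x)) (hint : ∀ σ ∈ s, Integrable (fun x ↦ f x * g x ^ σ) μ) :
    StrictAntiOn (fun σ : ℝ ↦ ∫ x, f x * g x ^ σ ∂μ) s := by
  intro σ hσ τ hτ hστ
  have hle : (fun x ↦ f x * g x ^ τ) ≤ᵐ[μ] fun x ↦ f x * g x ^ σ := by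
    filter_upwards [hg, hfg] with x hgx hfgx
    exact mul_rpow_le_mul_rpow_of_mul_one_sub_nonneg hgx hfgx hστ.le
  refine (integral_mono_ae (hint τ hτ) (hint σ hσ) hle).lt_of_ne fun heq ↦ hμ ?_
  filter_upwards [hg, (integral_eq_iff_of_ae_le (hint τ hτ) (hint σ hσ) hle).1 heq]
    with x hgx hx hpos
  exact (mul_rpow_lt_mul_rpow_of_mul_one_sub_pos hgx hpos hστ).ne hx

theorem strictAntiOn_integral_Ioi_mul_div_rpow {f : ℝ → ℝ} {s : Set ℝ} {t₀ : ℝ} (ht₀ : 0 < t₀)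
    (hpos : ∀ t ∈ Ioo 0 t₀, 0 < f t) (hneg : ∀ t ∈ Ioi t₀, f t ≤ 0)
    (hint : ∀ σ ∈ s, IntegrableOn (fun t ↦ f t * (t / t₀) ^ σ) (Ioi 0)) :
    StrictAntiOn (fun σ : ℝ ↦ ∫ t in Ioi 0, f t * (t / t₀) ^ σ) s := by
  have hbelow : ∀ t ∈ Ioo 0 t₀, 0 < f t * (1 - t / t₀) := fun t ht ↦
    mul_pos (hpos t ht) (sub_pos.2 ((div_lt_one ht₀).2 ht.2))
  refine strictAntiOn_integral_mul_rpow ?_ ?_ ?_ hint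
  · filter_upwards [ae_restrict_mem measurableSet_Ioi] with t ht using div_pos ht ht₀
  · filter_upwards [ae_restrict_mem measurableSet_Ioi] with t ht
    rcases lt_trichotomy t t₀ with htt₀ | rfl | htt₀
    · exact (hbelow t ⟨ht, htt₀⟩).le
    · simp [ht₀.ne']
    · exact mul_nonneg_of_nonpos_of_nonpos (hneg t htt₀)
        (sub_nonpos.2 ((one_le_div ht₀).2 htt₀.le))
  · have hfreq : ∃ᵐ t ∂volume.restrict (Ioo 0 t₀), 0 < f t * (1 - t / t₀) := by
      have : NeBot (ae (volume.restrict (Ioo 0 t₀))) := ae_neBot.2 (by simp [ht₀])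
      refine Eventually.frequently ?_
      filter_upwards [ae_restrict_mem measurableSet_Ioo] with t ht using hbelow t ht
    exact hfreq.filter_mono (ae_mono (Measure.restrict_mono Ioo_subset_Ioi_self le_rfl))

end SignChange

section Asymptotics

lemma abs_inv_one_sub_exp_neg_sub_inv_le_one {u : ℝ} (hu : 0 < u) :
    |(1 - exp (-u))⁻¹ - u⁻¹| ≤ 1 := by
  have hden : 0 < 1 - exp (-u) := sub_pos.2 (exp_lt_one_iff.2 (neg_lt_zero.2 hu))
  have hlower : u⁻¹ ≤ (1 - exp (-u))⁻¹ :=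
    inv_anti₀ hden (by linarith [one_sub_le_exp_neg u])
  have hupper : (1 - exp (-u))⁻¹ ≤ 1 + u⁻¹ := by
    have hexp : (1 + u) * exp (-u) ≤ 1 := by
      rw [exp_neg, ← div_eq_mul_inv, div_le_one (exp_pos u), add_comm]
      exact add_one_le_exp u
    rw [inv_le_iff_one_le_mul₀ hden, ← sub_nonneg]
    calc 0 ≤ (1 - (1 + u) * exp (-u)) / u := div_nonneg (sub_nonneg.2 hexp) hu.le
      _ = (1 + u⁻¹) * (1 - exp (-u)) - 1 := by field_simp; ring
  rw [abs_le]
  constructor <;> linarith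

lemma isBigO_inv_one_sub_exp_neg_sub_inv {w : ℝ} (hw : 0 < w) :
    (fun t : ℝ ↦ (1 - exp (-(w * t)))⁻¹ - (w * t)⁻¹) =O[𝓝[>] 0] fun _ ↦ (1 : ℝ) := by
  refine .of_bound' ?_
  filter_upwards [self_mem_nhdsWithin] with t ht
  simpa using abs_inv_one_sub_exp_neg_sub_inv_le_one (mul_pos hw ht)

lemma isBigO_one_inv_nhdsGT_zero : (fun _ : ℝ ↦ (1 : ℝ)) =O[𝓝[>] 0] (·⁻¹) :=
  (isLittleO_const_left.2 (.inr (tendsto_norm_atTop_atTop.comp tendsto_inv_nhdsGT_zero))).isBigO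

lemma isBigO_inv_const_mul (w : ℝ) (l : Filter ℝ) : (fun t : ℝ ↦ (w * t)⁻¹) =O[l] (·⁻¹) := by
  simpa only [mul_inv] using isBigO_const_mul_self w⁻¹ (·⁻¹) l

lemma isBigO_inv_one_sub_exp_neg_nhdsGT_zero {w : ℝ} (hw : 0 < w) :
    (fun t : ℝ ↦ (1 - exp (-(w * t)))⁻¹) =O[𝓝[>] 0] (·⁻¹) := by
  simpa only [sub_add_cancel] using
    ((isBigO_inv_one_sub_exp_neg_sub_inv hw).trans isBigO_one_inv_nhdsGT_zero).add
      (isBigO_inv_const_mul w _)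

lemma isBigO_inv_one_sub_exp_neg_atTop {w : ℝ} (hw : 0 < w) :
    (fun t : ℝ ↦ (1 - exp (-(w * t)))⁻¹) =O[atTop] fun _ ↦ (1 : ℝ) := by
  have hexp : Tendsto (fun t : ℝ ↦ exp (-(w * t))) atTop (𝓝 0) :=
    tendsto_exp_neg_atTop_nhds_zero.comp (tendsto_id.const_mul_atTop hw)
  exact ((hexp.const_sub 1).inv₀ (by simp)).isBigO_one ℝ

lemma isBigO_exp_mul_sub_one_nhds_zero (a : ℝ) :
    (fun t : ℝ ↦ exp (a * t) - 1) =O[𝓝 0] fun t ↦ t := by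
  have hderiv : HasDerivAt (fun t : ℝ ↦ exp (a * t)) (exp (a * 0) * (a * 1)) 0 :=
    ((hasDerivAt_id (0 : ℝ)).const_mul a).exp
  simpa using hderiv.isBigO_sub

end Asymptotics

section Kernel

lemma G₂_eq_exp_mul_inv_mul_inv_sub (a w₁ w₂ t : ℝ) :
    G₂ a w₁ w₂ t = exp (-a * t) * ((1 - exp (-(w₁ * t)))⁻¹ * (1 - exp (-(w₂ * t)))⁻¹)
      - (w₁ * t)⁻¹ * (w₂ * t)⁻¹ := by
  have hfactor (u : ℝ) : exp u - 1 = exp u * (1 - exp (-u)) := by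
    rw [mul_sub, mul_one, ← exp_add, add_neg_cancel, exp_zero]
  have hexp : exp ((w₁ + w₂ - a) * t) = exp (-a * t) * (exp (w₁ * t) * exp (w₂ * t)) := by
    rw [← exp_add, ← exp_add]
    ring_nf
  rw [G₂, hexp, hfactor (w₁ * t), hfactor (w₂ * t), mul_mul_mul_comm, mul_comm (exp (-a * t)),
    mul_div_mul_left _ _ (by positivity), div_eq_mul_inv, mul_inv, one_div, ← mul_inv (w₁ * t)]
  ring_nf

variable {a w₁ w₂ : ℝ}

lemma continuousOn_G₂ (hw₁ : 0 < w₁) (hw₂ : 0 < w₂) : ContinuousOn (G₂ a w₁ w₂) (Ioi 0) := by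
  have hexp {w t : ℝ} (hw : 0 < w) (ht : t ∈ Ioi 0) : exp (w * t) - 1 ≠ 0 :=
    (sub_pos.2 (one_lt_exp_iff.2 (mul_pos hw ht))).ne'
  unfold G₂
  refine .sub (.div (by fun_prop) (by fun_prop) fun t ht ↦ mul_ne_zero (hexp hw₁ ht) (hexp hw₂ ht))
    (.div (by fun_prop) (by fun_prop) fun t (ht : 0 < t) ↦ by positivity)

lemma isBigO_G₂_nhdsGT_zero (hw₁ : 0 < w₁) (hw₂ : 0 < w₂) :
    G₂ a w₁ w₂ =O[𝓝[>] 0] (·⁻¹) := by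
  let A (w t : ℝ) : ℝ := (1 - exp (-(w * t)))⁻¹
  have hA₁ : A w₁ =O[𝓝[>] 0] (·⁻¹) := isBigO_inv_one_sub_exp_neg_nhdsGT_zero hw₁
  have hA₂ : A w₂ =O[𝓝[>] 0] (·⁻¹) := isBigO_inv_one_sub_exp_neg_nhdsGT_zero hw₂
  have hexp : (fun t ↦ (exp (-a * t) - 1) * (A w₁ t * A w₂ t)) =O[𝓝[>] 0] (·⁻¹) := by
    refine (((isBigO_exp_mul_sub_one_nhds_zero (-a)).mono nhdsWithin_le_nhds).mul
      (hA₁.mul hA₂)).congr' .rfl ?_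
    filter_upwards [self_mem_nhdsWithin] with t (ht : 0 < t)
    field_simp
  have hpole₁ : (fun t ↦ (A w₁ t - (w₁ * t)⁻¹) * A w₂ t) =O[𝓝[>] 0] (·⁻¹) := by
    simpa only [one_mul] using (isBigO_inv_one_sub_exp_neg_sub_inv hw₁).mul hA₂
  have hpole₂ : (fun t ↦ (w₁ * t)⁻¹ * (A w₂ t - (w₂ * t)⁻¹)) =O[𝓝[>] 0] (·⁻¹) := by
    simpa only [mul_one] using
      (isBigO_inv_const_mul w₁ _).mul (isBigO_inv_one_sub_exp_neg_sub_inv hw₂)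
  refine ((hexp.add hpole₁).add hpole₂).congr_left fun t ↦ ?_
  rw [G₂_eq_exp_mul_inv_mul_inv_sub]
  ring

lemma isBigO_G₂_atTop (hw₁ : 0 < w₁) (hw₂ : 0 < w₂) (ha : 0 < a) :
    G₂ a w₁ w₂ =O[atTop] fun t ↦ t ^ (-2 : ℝ) := by
  have hexp : (fun t ↦ exp (-a * t) * ((1 - exp (-(w₁ * t)))⁻¹ * (1 - exp (-(w₂ * t)))⁻¹))
      =O[atTop] fun t ↦ t ^ (-2 : ℝ) := by
    simpa only [mul_one] using (isLittleO_exp_neg_mul_rpow_atTop ha (-2)).isBigO.mul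
      ((isBigO_inv_one_sub_exp_neg_atTop hw₁).mul (isBigO_inv_one_sub_exp_neg_atTop hw₂))
  have hpole : (fun t : ℝ ↦ (w₁ * t)⁻¹ * (w₂ * t)⁻¹) =O[atTop] fun t ↦ t ^ (-2 : ℝ) := by
    refine ((isBigO_inv_const_mul w₁ _).mul (isBigO_inv_const_mul w₂ _)).congr' .rfl ?_
    filter_upwards [eventually_gt_atTop 0] with t ht
    rw [rpow_neg ht.le, rpow_two, sq, mul_inv]
  exact (hexp.sub hpole).congr_left fun t ↦ (G₂_eq_exp_mul_inv_mul_inv_sub a w₁ w₂ t).symm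

lemma integrableOn_rpow_mul_G₂ (hw₁ : 0 < w₁) (hw₂ : 0 < w₂) (ha : 0 < a) {σ : ℝ}
    (hσ : σ ∈ Ioo 1 2) : IntegrableOn (fun t ↦ t ^ (σ - 1) * G₂ a w₁ w₂ t) (Ioi 0) :=
  mellin_convergent_of_isBigO_scalar
    ((continuousOn_G₂ hw₁ hw₂).locallyIntegrableOn measurableSet_Ioi)
    (isBigO_G₂_atTop hw₁ hw₂ ha) hσ.2
    (by simpa only [rpow_neg_one] using isBigO_G₂_nhdsGT_zero hw₁ hw₂) hσ.1

lemma integrableOn_G₂_div_mul_div_rpow (hw₁ : 0 < w₁) (hw₂ : 0 < w₂) (ha : 0 < a)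
    {t₀ : ℝ} (ht₀ : 0 < t₀) {σ : ℝ} (hσ : σ ∈ Ioo 1 2) :
    IntegrableOn (fun t ↦ G₂ a w₁ w₂ t / t * (t / t₀) ^ σ) (Ioi 0) := by
  refine IntegrableOn.congr_fun ((integrableOn_rpow_mul_G₂ hw₁ hw₂ ha hσ).const_mul (t₀ ^ σ)⁻¹)
    (fun t (ht : 0 < t) ↦ ?_) measurableSet_Ioi
  rw [div_rpow ht.le ht₀.le, rpow_sub_one ht.ne']
  ring

end Kernel

theorem stmt16 (w₁ w₂ a : ℝ) (hw₁ : 0 < w₁) (hw₂ : 0 < w₂)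
    (ha : 0 < a) (ha' : a < (w₁ + w₂) / 2) (t₀ : ℝ) (ht₀ : 0 < t₀)
    (hzero : G₂ a w₁ w₂ t₀ = 0)
    (hpos : ∀ t : ℝ, 0 < t → t < t₀ → 0 < G₂ a w₁ w₂ t)
    (hneg : ∀ t : ℝ, t₀ < t → G₂ a w₁ w₂ t < 0) :
    StrictAntiOn
      (fun σ : ℝ => ∫ t in Set.Ioi (0 : ℝ), G₂ a w₁ w₂ t * (t / t₀) ^ σ / t)
      (Set.Ioo (1 : ℝ) 2) := by
  simp only [mul_div_right_comm]
  exact strictAntiOn_integral_Ioi_mul_div_rpow ht₀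
    (fun t ht ↦ div_pos (hpos t ht.1 ht.2) ht.1)
    (fun t ht ↦ (div_neg_of_neg_of_pos (hneg t ht) (ht₀.trans ht)).le)
    fun σ hσ ↦ integrableOn_G₂_div_mul_div_rpow hw₁ hw₂ ha ht₀ hσ
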